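/- For every κ > 0, every Schwartz function f : ℝ → ℂ, every integer ℓ ≥ 1, and all nonnegative integers σ₁, …, σ_ℓ with S = σ₁ + ⋯ + σ_ℓ, one has ∏_{i=1}^{ℓ} ‖f^{(σᵢ)}‖_{H^{-1}_κ} ≤ ‖f^{(S)}‖_{H^{-1}_κ} · ‖f‖_{H^{-1}_κ}^{ℓ−1}. -/

import Mathlib

open MeasureTheory

/-- The Fourier transform with the paper's normalization:
`f̂(ξ) = (2π)^{-1/2} ∫ e^{-iξx} f(x) dx`. -/
noncomputable def ft (f : ℝ → ℂ) (ξ : ℝ) : ℂ :=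
  (Real.sqrt (2 * Real.pi) : ℂ)⁻¹ * ∫ x : ℝ, Complex.exp (-(Complex.I * (ξ : ℂ) * (x : ℂ))) * f x

/-- The `H^{-1}_κ` norm: `‖f‖²_{H^{-1}_κ} = ∫ (ξ²+4κ²)^{-1} |f̂(ξ)|² dξ`. -/
noncomputable def HnegNorm (κ : ℝ) (g : ℝ → ℂ) : ℝ :=
  Real.sqrt (∫ ξ : ℝ, (ξ ^ 2 + 4 * κ ^ 2)⁻¹ * ‖ft g ξ‖ ^ 2)

/-!
Differentiation becomes multiplication by `iξ` on the Fourier side, so `‖f^{(k)}‖²_{H^{-1}_κ}` is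
the `k`-th moment of `ξ²` under the finite measure `(ξ² + 4κ²)⁻¹ |f̂(ξ)|² dξ`. With
`S = σ₁ + ⋯ + σ_ℓ`, Hölder's inequality bounds the `k`-th moment by the `k/S`-th power of the `S`-th
moment times the `(1 - k/S)`-th power of the total mass. When these bounds are multiplied over
`k = σ₁, …, σ_ℓ`, the exponents add up to `1` and `ℓ - 1`.
-/

open scoped ENNReal FourierTransform

section Moments

variable {α ι : Type*} [MeasurableSpace α] {μ : Measure α} {X : α → ℝ≥0∞}

-- Hölder's exponents `k / N` and `1 - k / N` are written as natural powers of `N`-th roots, so that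
-- a product over several `k` only adds natural exponents, which needs no care at `0` and `∞`.
lemma lintegral_pow_le_lintegral_pow_mul_measure_univ (hX : AEMeasurable X μ) {k N : ℕ}
    (hN : N ≠ 0) (hk : k ≤ N) :
    ∫⁻ a, X a ^ k ∂μ ≤
      ((∫⁻ a, X a ^ N ∂μ) ^ (N⁻¹ : ℝ)) ^ k * (μ Set.univ ^ (N⁻¹ : ℝ)) ^ (N - k) := by
  have hsum : (N : ℝ)⁻¹ * k + (N : ℝ)⁻¹ * (N - k : ℕ) = 1 := by
    rw [← mul_add, ← Nat.cast_add, Nat.add_sub_cancel' hk, inv_mul_cancel₀ (mod_cast hN)]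
  have holder := ENNReal.lintegral_mul_norm_pow_le (hX.pow_const N)
    (aemeasurable_const (b := (1 : ℝ≥0∞))) (by positivity) (by positivity) hsum
  simpa only [ENNReal.rpow_mul_natCast, ENNReal.one_rpow, one_pow, mul_one, lintegral_one,
    ENNReal.pow_rpow_inv_natCast hN] using holder

theorem prod_lintegral_pow_le (hX : AEMeasurable X μ) {s : Finset ι} (hs : s.Nonempty)
    (σ : ι → ℕ) :
    ∏ i ∈ s, ∫⁻ a, X a ^ σ i ∂μ ≤
      (∫⁻ a, X a ^ (∑ i ∈ s, σ i) ∂μ) * μ Set.univ ^ (s.card - 1) := by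
  set N := ∑ i ∈ s, σ i with hN_def
  have hcard : s.card - 1 + 1 = s.card := Nat.sub_add_cancel hs.card_pos
  obtain hN | hN := eq_or_ne N 0
  · have hσ : ∀ i ∈ s, σ i = 0 := Finset.sum_eq_zero_iff.mp hN
    rw [Finset.prod_congr rfl fun i hi ↦ by rw [hσ i hi], hN]
    simp only [pow_zero, lintegral_one, Finset.prod_const]
    rw [← pow_succ', hcard]
  have hle (i) (hi : i ∈ s) : σ i ≤ N := Finset.single_le_sum_of_canonicallyOrdered hi
  have hsum : ∑ i ∈ s, (N - σ i) = N * (s.card - 1) := by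
    rw [Finset.sum_tsub_distrib s hle, ← hN_def, Finset.sum_const, smul_eq_mul, Nat.mul_sub_one,
      mul_comm]
  calc ∏ i ∈ s, ∫⁻ a, X a ^ σ i ∂μ
      ≤ ∏ i ∈ s, (((∫⁻ a, X a ^ N ∂μ) ^ (N⁻¹ : ℝ)) ^ σ i *
          (μ Set.univ ^ (N⁻¹ : ℝ)) ^ (N - σ i)) :=
        Finset.prod_le_prod' fun i hi ↦
          lintegral_pow_le_lintegral_pow_mul_measure_univ hX hN (hle i hi)
    _ = ((∫⁻ a, X a ^ N ∂μ) ^ (N⁻¹ : ℝ)) ^ N *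
          ((μ Set.univ ^ (N⁻¹ : ℝ)) ^ N) ^ (s.card - 1) := by
        rw [Finset.prod_mul_distrib, Finset.prod_pow_eq_pow_sum, Finset.prod_pow_eq_pow_sum, hsum,
          pow_mul]
    _ = (∫⁻ a, X a ^ N ∂μ) * μ Set.univ ^ (s.card - 1) := by
        simp only [ENNReal.rpow_inv_natCast_pow hN]

end Moments

section FourierTransform

variable {f : ℝ → ℂ}

lemma ft_eq_fourier (f : ℝ → ℂ) (ξ : ℝ) :
    ft f ξ = (√(2 * Real.pi) : ℂ)⁻¹ * 𝓕 f ((2 * Real.pi)⁻¹ * ξ) := by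
  rw [ft, Real.fourier_real_eq_integral_exp_smul]
  congr! 5 with x
  push_cast
  field_simp

lemma continuous_ft (hf : Integrable f) : Continuous (ft f) := by
  have h𝓕 : Continuous (𝓕 f) := VectorFourier.fourierIntegral_continuous
    Real.continuous_fourierChar (innerSL ℝ).continuous₂ hf
  simp only [funext (ft_eq_fourier f)]
  fun_prop

lemma norm_ft_le (f : ℝ → ℂ) (ξ : ℝ) : ‖ft f ξ‖ ≤ (√(2 * Real.pi))⁻¹ * ∫ x, ‖f x‖ := by
  rw [ft_eq_fourier, norm_mul, norm_inv, Complex.norm_real,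
    Real.norm_of_nonneg (Real.sqrt_nonneg _)]
  gcongr
  exact VectorFourier.norm_fourierIntegral_le_integral_norm _ _ _ _ _

lemma ft_iteratedDeriv {k : ℕ} (hf : ContDiff ℝ k f)
    (hint : ∀ n ≤ k, Integrable (iteratedDeriv n f)) (ξ : ℝ) :
    ft (iteratedDeriv k f) ξ = (Complex.I * ξ) ^ k * ft f ξ := by
  have hfreq : 2 * Real.pi * Complex.I * ((2 * Real.pi)⁻¹ * ξ : ℝ) = Complex.I * ξ := by
    push_cast
    field_simp
  rw [ft_eq_fourier, ft_eq_fourier, Real.fourier_iteratedDeriv (N := k) hf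
    (fun n hn ↦ hint n (mod_cast hn)) le_rfl]
  simp only [hfreq, smul_eq_mul]
  ring

lemma norm_ft_iteratedDeriv_sq {k : ℕ} (hf : ContDiff ℝ k f)
    (hint : ∀ n ≤ k, Integrable (iteratedDeriv n f)) (ξ : ℝ) :
    ‖ft (iteratedDeriv k f) ξ‖ ^ 2 = (ξ ^ 2) ^ k * ‖ft f ξ‖ ^ 2 := by
  rw [ft_iteratedDeriv hf hint, norm_mul, norm_pow, norm_mul, Complex.norm_I, one_mul,
    Complex.norm_real, mul_pow, pow_right_comm, Real.norm_eq_abs, sq_abs]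

end FourierTransform

section SpectralMeasure

variable {κ : ℝ} {f g : ℝ → ℂ}

lemma HnegNorm_nonneg (κ : ℝ) (g : ℝ → ℂ) : 0 ≤ HnegNorm κ g := Real.sqrt_nonneg _

lemma integrable_inv_sq_add_sq {c : ℝ} (hc : c ≠ 0) :
    Integrable fun ξ : ℝ ↦ (ξ ^ 2 + c ^ 2)⁻¹ := by
  refine ((integrable_inv_one_add_sq.comp_div hc).const_mul (c ^ 2)⁻¹).congr (.of_forall fun ξ ↦ ?_)
  dsimp only
  rw [← mul_inv]
  congr 1
  field_simp
  ring

lemma integrable_inv_mul_norm_ft_sq (hκ : κ ≠ 0) (hg : Integrable g) :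
    Integrable fun ξ : ℝ ↦ (ξ ^ 2 + 4 * κ ^ 2)⁻¹ * ‖ft g ξ‖ ^ 2 := by
  have hweight : Integrable fun ξ : ℝ ↦ (ξ ^ 2 + 4 * κ ^ 2)⁻¹ := by
    convert integrable_inv_sq_add_sq (mul_ne_zero two_ne_zero hκ) using 4
    ring
  refine hweight.mul_bdd (c := ((√(2 * Real.pi))⁻¹ * ∫ x, ‖g x‖) ^ 2)
    ((continuous_ft hg).norm.pow 2).aestronglyMeasurable (.of_forall fun ξ ↦ ?_)
  rw [norm_pow, norm_norm]
  gcongr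
  exact norm_ft_le g ξ

/-- The measure `(ξ² + 4κ²)⁻¹ |f̂(ξ)|² dξ` on the frequency line, whose total mass is
`‖f‖²_{H^{-1}_κ}` and whose `k`-th moment of `ξ²` is `‖f^{(k)}‖²_{H^{-1}_κ}`. -/
noncomputable def spectralMeasure (κ : ℝ) (f : ℝ → ℂ) : Measure ℝ :=
  volume.withDensity fun ξ ↦ ENNReal.ofReal ((ξ ^ 2 + 4 * κ ^ 2)⁻¹ * ‖ft f ξ‖ ^ 2)

lemma spectralMeasure_univ (hκ : κ ≠ 0) (hg : Integrable g) :
    spectralMeasure κ g Set.univ = ENNReal.ofReal (HnegNorm κ g ^ 2) := by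
  have hnonneg (ξ : ℝ) : 0 ≤ (ξ ^ 2 + 4 * κ ^ 2)⁻¹ * ‖ft g ξ‖ ^ 2 := by positivity
  rw [HnegNorm, Real.sq_sqrt (integral_nonneg hnonneg), spectralMeasure,
    withDensity_apply _ .univ, Measure.restrict_univ,
    ofReal_integral_eq_lintegral_ofReal (integrable_inv_mul_norm_ft_sq hκ hg) (.of_forall hnonneg)]

lemma lintegral_sq_pow_spectralMeasure {k : ℕ} (hκ : κ ≠ 0) (hf : ContDiff ℝ k f)
    (hint : ∀ n ≤ k, Integrable (iteratedDeriv n f)) :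
    ∫⁻ ξ, ENNReal.ofReal (ξ ^ 2) ^ k ∂spectralMeasure κ f =
      ENNReal.ofReal (HnegNorm κ (iteratedDeriv k f) ^ 2) := by
  have hcont : Continuous (ft f) := continuous_ft (by simpa using hint 0 k.zero_le)
  rw [← spectralMeasure_univ hκ (hint k le_rfl), spectralMeasure, spectralMeasure,
    withDensity_apply _ .univ, Measure.restrict_univ,
    lintegral_withDensity_eq_lintegral_mul _ (by fun_prop) (by fun_prop)]
  refine lintegral_congr fun ξ ↦ ?_
  rw [Pi.mul_apply, ← ENNReal.ofReal_pow (sq_nonneg ξ), ← ENNReal.ofReal_mul (by positivity),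
    norm_ft_iteratedDeriv_sq hf hint]
  congr 1
  ring

end SpectralMeasure

lemma integrable_iteratedDeriv_of_schwartzMap {F : Type*} [NormedAddCommGroup F] [NormedSpace ℝ F]
    (f : SchwartzMap ℝ F) (n : ℕ) : Integrable (iteratedDeriv n f) := by
  have hcont : Continuous (iteratedDeriv n f) := (f.smooth n).continuous_iteratedDeriv n le_rfl
  rw [← integrable_norm_iff hcont.aestronglyMeasurable]
  simpa only [pow_zero, one_mul, norm_iteratedFDeriv_eq_norm_iteratedDeriv] using
    f.integrable_pow_mul_iteratedFDeriv volume 0 n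

theorem stmt13_general {κ : ℝ} (hκ : κ ≠ 0) {f : ℝ → ℂ} {ℓ : ℕ} (hℓ : 1 ≤ ℓ) (σ : Fin ℓ → ℕ)
    (hf : ContDiff ℝ (∑ i, σ i : ℕ) f)
    (hint : ∀ n ≤ ∑ i, σ i, Integrable (iteratedDeriv n f)) :
    ∏ i, HnegNorm κ (iteratedDeriv (σ i) f) ≤
      HnegNorm κ (iteratedDeriv (∑ i, σ i) f) * HnegNorm κ f ^ (ℓ - 1) := by
  have : Nonempty (Fin ℓ) := Fin.pos_iff_nonempty.mp hℓ
  have hle (i : Fin ℓ) : σ i ≤ ∑ i, σ i :=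
    Finset.single_le_sum_of_canonicallyOrdered (Finset.mem_univ i)
  have hmoment (k : ℕ) (hk : k ≤ ∑ i, σ i) :=
    lintegral_sq_pow_spectralMeasure hκ (hf.of_le (mod_cast hk)) fun n hn ↦ hint n (hn.trans hk)
  have hmass := spectralMeasure_univ hκ (g := f) (by simpa using hint 0 (Nat.zero_le _))
  have hprod := prod_lintegral_pow_le (μ := spectralMeasure κ f)
    (X := fun ξ ↦ ENNReal.ofReal (ξ ^ 2)) (by fun_prop) Finset.univ_nonempty σ
  rw [Finset.prod_congr rfl fun i _ ↦ hmoment (σ i) (hle i), hmoment _ le_rfl, hmass,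
    Finset.card_fin, ← ENNReal.ofReal_prod_of_nonneg fun _ _ ↦ sq_nonneg _,
    ← ENNReal.ofReal_pow (sq_nonneg _), ← ENNReal.ofReal_mul (sq_nonneg _),
    ENNReal.ofReal_le_ofReal_iff (by positivity)] at hprod
  have hsq : (∏ i, HnegNorm κ (iteratedDeriv (σ i) f)) ^ 2 ≤
      (HnegNorm κ (iteratedDeriv (∑ i, σ i) f) * HnegNorm κ f ^ (ℓ - 1)) ^ 2 := by
    rwa [← Finset.prod_pow, mul_pow, pow_right_comm]
  exact le_of_sq_le_sq hsq
    (mul_nonneg (HnegNorm_nonneg _ _) (pow_nonneg (HnegNorm_nonneg _ _) _))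

/-- Hölder's inequality in Fourier variables:
`∏ᵢ ‖f^{(σᵢ)}‖_{H^{-1}_κ} ≤ ‖f^{(σ₁+⋯+σ_ℓ)}‖_{H^{-1}_κ} ‖f‖_{H^{-1}_κ}^{ℓ−1}`. -/
theorem stmt13 (κ : ℝ) (hκ : 0 < κ) (f : SchwartzMap ℝ ℂ) (ℓ : ℕ) (hℓ : 1 ≤ ℓ)
    (σ : Fin ℓ → ℕ) :
    ∏ i, HnegNorm κ (iteratedDeriv (σ i) ⇑f) ≤
      HnegNorm κ (iteratedDeriv (∑ i, σ i) ⇑f) * HnegNorm κ ⇑f ^ (ℓ - 1) := by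
  exact stmt13_general hκ.ne' hℓ σ (f.smooth _)
    fun n _ ↦ integrable_iteratedDeriv_of_schwartzMap f n
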